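/- arXiv:0908.2299 — 5 statements merged into one kernel-verified Lean document; each statement's English description precedes it below -/
import Mathlib

section
/- Let $k$ be a field of characteristic zero, $d \ge 0$, $B = k[x_1,\dots,x_d]$, and let $k$ be the augmentation $B$-module. Then for every $n \ge 0$ the $k$-vector space $\mathrm{Ext}^n_B(k,k)$ is finite dimensional of dimension $\binom{d}{n}$; in particular $\mathrm{Ext}^n_B(k,k) = 0$ for all $n > d$. -/
open CategoryTheory

noncomputable section

variable (k : Type) [Field k] [CharZero k] (d : ℕ)

/-- The augmentation module structure on `k` over the polynomial ring `k[x₁,…,x_d]`: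
every variable `xᵢ` acts by `0`, i.e. a polynomial acts by multiplication by its
constant coefficient. -/
instance augmentationModule : Module (MvPolynomial (Fin d) k) k :=
  (MvPolynomial.constantCoeff : MvPolynomial (Fin d) k →+* k).toModule

/-- The augmentation module `k` as an object of the category of modules over the
polynomial ring `B = k[x₁,…,x_d]`. -/
def KMod : ModuleCat (MvPolynomial (Fin d) k) :=
  ModuleCat.of (MvPolynomial (Fin d) k) k

section Bridge

open CategoryTheory.Abelian


variable {C : Type 1} [Category.{0} C] [Abelian C] [EnoughProjectives C] [HasExt.{0} C]
  {F : Type} [Field F] [Linear F C] {X Y : C}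

lemma extMk_zero_inj (P : ProjectiveResolution X) (f : P.complex.X 0 ⟶ Y) (m : ℕ)
    (hm : 0 + 1 = m) (hf : P.complex.d m 0 ≫ f = 0)
    (h : P.extMk f m hm hf = 0) : f = 0 := by
  rw [← P.extEquivCohomologyClass.apply_eq_iff_eq,
    ProjectiveResolution.extEquivCohomologyClass_extMk,
    ProjectiveResolution.extEquivCohomologyClass_zero,
    CochainComplex.HomComplex.CohomologyClass.mk_eq_zero_iff,
    CochainComplex.HomComplex.Cocycle.toSingleMk_mem_coboundaries_iff _ _ _ _ _ 1 (by simp)] at h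
  obtain ⟨g, hg⟩ := h
  have hz : Limits.IsZero (P.cochainComplex.X 1) :=
    CochainComplex.isZero_of_isStrictlyLE _ 0 1 (by lia)
  rw [hz.eq_of_src g 0, Limits.comp_zero] at hg
  rw [← cancel_epi (P.cochainComplexXIso (-(0 : ℕ)) 0 rfl).hom, ← hg, Limits.comp_zero]

lemma smul_extMk (P : ProjectiveResolution X) {n : ℕ} (f : P.complex.X n ⟶ Y) (m : ℕ)
    (hm : n + 1 = m) (hf : P.complex.d m n ≫ f = 0) (r : F) :
    r • P.extMk f m hm hf = P.extMk (r • f) m hm (by simp [hf]) := by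
  rw [Ext.smul_eq_comp_mk₀, ProjectiveResolution.extMk_comp_mk₀]
  simp

/-- The linear map from cocycles to `Ext`. -/
def cocycleToExt (P : ProjectiveResolution X) (n : ℕ) :
    LinearMap.ker ((P.complex.linearYonedaObj F Y).sc n).g.hom →ₗ[F] Ext X Y n where
  toFun f := P.extMk (Y := Y) (n := n) f.1 ((ComplexShape.up ℕ).next n) (by simp) f.2
  map_add' f g := (P.add_extMk _ _ _ _ _ _).symm
  map_smul' r f := (smul_extMk P _ _ _ _ _).symm

lemma cocycleToExt_surjective (P : ProjectiveResolution X) (n : ℕ) :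
    Function.Surjective (cocycleToExt (F := F) (Y := Y) P n) := by
  intro α
  obtain ⟨f, hf, h⟩ := P.extMk_surjective α ((ComplexShape.up ℕ).next n) (by simp)
  exact ⟨⟨f, hf⟩, h⟩

lemma ker_cocycleToExt (P : ProjectiveResolution X) (n : ℕ) :
    LinearMap.ker (cocycleToExt (F := F) (Y := Y) P n) =
      LinearMap.range ((P.complex.linearYonedaObj F Y).sc n).moduleCatToCycles := by
  ext f
  rw [LinearMap.mem_ker, LinearMap.mem_range]
  cases n with
  | zero =>
    constructor
    · intro h
      have := extMk_zero_inj P f.1 ((ComplexShape.up ℕ).next 0) (by simp) f.2 h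
      exact ⟨0, by rw [map_zero]; exact Subtype.ext this.symm⟩
    · rintro ⟨g, rfl⟩
      have h0 : ((P.complex.linearYonedaObj F Y).sc 0).f = 0 :=
        (P.complex.linearYonedaObj F Y).shape ((ComplexShape.up ℕ).prev 0) 0
          (Nat.succ_ne_zero _)
      have : ((P.complex.linearYonedaObj F Y).sc 0).moduleCatToCycles g = 0 := by
        apply Subtype.ext
        change ((P.complex.linearYonedaObj F Y).sc 0).f.hom g = 0
        rw [h0]; rfl
      rw [this, map_zero]
  | succ n =>
    refine (P.extMk_eq_zero_iff f.1 ((ComplexShape.up ℕ).next (n + 1)) (by simp) f.2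
      ((ComplexShape.up ℕ).prev (n + 1)) (by simp)).trans ?_
    constructor
    · rintro ⟨g, hg⟩
      exact ⟨g, Subtype.ext hg⟩
    · rintro ⟨g, hg⟩
      exact ⟨g, congrArg Subtype.val hg⟩

/-- The two definitions of `Ext` agree. -/
def oldExtEquiv (P : ProjectiveResolution X) (n : ℕ) :
    (((_root_.Ext F C n).obj (Opposite.op X)).obj Y) ≃ₗ[F] Ext X Y n :=
  (P.isoExt n Y).toLinearEquiv ≪≫ₗ
    ((P.complex.linearYonedaObj F Y).sc n).moduleCatHomologyIso.toLinearEquiv ≪≫ₗ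
    Submodule.quotEquivOfEq _ _ (ker_cocycleToExt P n).symm ≪≫ₗ
    (cocycleToExt P n).quotKerEquivOfSurjective (cocycleToExt_surjective P n)

end Bridge

section Steps

open CategoryTheory.Abelian MvPolynomial


lemma finrank_of_exact {U V W : Type} [AddCommGroup U] [AddCommGroup V] [AddCommGroup W]
    [Module k U] [Module k V] [Module k W] (f : U →ₗ[k] V) (g : V →ₗ[k] W)
    (hf : Function.Injective f) (hg : Function.Surjective g)
    (h : LinearMap.ker g = LinearMap.range f) [Module.Finite k U] [Module.Finite k W] :
    Module.Finite k V ∧ Module.finrank k V = Module.finrank k U + Module.finrank k W := by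
  have e1 : (V ⧸ LinearMap.ker g) ≃ₗ[k] W := g.quotKerEquivOfSurjective hg
  have e2 : U ≃ₗ[k] LinearMap.range f := LinearEquiv.ofInjective f hf
  have e3 : U ≃ₗ[k] LinearMap.ker g := e2 ≪≫ₗ LinearEquiv.ofEq _ _ h.symm
  have : Module.Finite k (LinearMap.ker g) := Module.Finite.equiv e3
  have : Module.Finite k (V ⧸ LinearMap.ker g) := Module.Finite.equiv e1.symm
  have hV : Module.Finite k V := Module.Finite.of_submodule_quotient (LinearMap.ker g)
  refine ⟨hV, ?_⟩
  rw [← (LinearMap.ker g).finrank_quotient_add_finrank, e1.finrank_eq, e3.finrank_eq, add_comm]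

/-- `Ext^n(M, k)` has dimension `c.choose n` for all `n`. -/
def HasDims (M : ModuleCat.{0} (MvPolynomial (Fin d) k)) (c : ℕ) : Prop :=
  ∀ n : ℕ, Module.Finite k (Ext M (KMod k d) n) ∧
    Module.finrank k (Ext M (KMod k d) n) = c.choose n

lemma smul_KMod (i : Fin d) : (X i : MvPolynomial (Fin d) k) • 𝟙 (KMod k d) = 0 := by
  ext x
  have h : ∀ y : k, constantCoeff (X i : MvPolynomial (Fin d) k) * y = 0 := by simp
  exact h x

lemma HasDims.step {S : ShortComplex (ModuleCat.{0} (MvPolynomial (Fin d) k))}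
    (hS : S.ShortExact) (h12 : S.X₁ = S.X₂) (i : Fin d)
    (hf : S.f = eqToHom h12 ≫ ((X i : MvPolynomial (Fin d) k) • 𝟙 _)) (c : ℕ)
    (h : HasDims k d S.X₂ c) : HasDims k d S.X₃ (c + 1) := by
  have hzero : ∀ (n : ℕ) (x : Ext S.X₂ (KMod k d) n),
      (Ext.mk₀ S.f).comp x (zero_add n) = 0 := by
    intro n x
    have h1 : (X i : MvPolynomial (Fin d) k) • x = 0 := by
      rw [Ext.smul_eq_comp_mk₀, smul_KMod, Ext.mk₀_zero, Ext.comp_zero]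
    rw [hf, Linear.comp_smul, Ext.mk₀_smul, Ext.smul_comp, ← Ext.comp_smul, h1, Ext.comp_zero]
  have h' : HasDims k d S.X₁ c := h12 ▸ h
  have hsurj : ∀ n, Function.Surjective
      (Ext.precompOfLinear (Ext.mk₀ S.g) k (KMod k d) (zero_add n)) := fun n x =>
    Ext.contravariant_sequence_exact₂ hS _ x (hzero n x)
  intro n
  cases n with
  | zero =>
    have := hS.epi_g
    have hinj : Function.Injective
      (Ext.precompOfLinear (Ext.mk₀ S.g) k (KMod k d) (zero_add 0)) :=
        Ext.precomp_mk₀_injective_of_epi (KMod k d) S.g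
    let e := LinearEquiv.ofBijective _ ⟨hinj, hsurj 0⟩
    have := (h 0).1
    exact ⟨Module.Finite.equiv e.symm, by rw [e.finrank_eq, (h 0).2]; simp⟩
  | succ n =>
    have i1 := (h' n).1
    have i2 := (h (n + 1)).1
    have := finrank_of_exact k
      (Ext.precompOfLinear hS.extClass k (KMod k d) (add_comm 1 n))
      (Ext.precompOfLinear (Ext.mk₀ S.g) k (KMod k d) (zero_add (n + 1))) ?_ (hsurj _) ?_
    · refine ⟨this.1, ?_⟩
      rw [this.2, (h' n).2, (h (n + 1)).2, Nat.choose_succ_succ]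
    · rw [← LinearMap.ker_eq_bot, LinearMap.ker_eq_bot']
      intro x hx
      obtain ⟨y, rfl⟩ := Ext.contravariant_sequence_exact₁ hS _ x (add_comm 1 n) hx
      exact hzero _ _
    · ext x
      constructor
      · intro hx
        exact Ext.contravariant_sequence_exact₃ hS _ x hx (add_comm 1 n)
      · rintro ⟨y, rfl⟩
        change (Ext.mk₀ S.g).comp (hS.extClass.comp y (add_comm 1 n)) (zero_add (n + 1)) = 0
        simp

lemma hasDims_base (N : ModuleCat.{0} (MvPolynomial (Fin d) k))
    (f : MvPolynomial (Fin d) k →ₗ[MvPolynomial (Fin d) k] N) (hf : Function.Bijective f) :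
    HasDims k d N 0 := by
  let e := LinearEquiv.ofBijective f hf
  have : Module.Projective (MvPolynomial (Fin d) k) N := Module.Projective.of_equiv e
  have : Projective N := (IsProjective.iff_projective N).1 this
  intro n
  cases n with
  | succ n =>
    have : Subsingleton (Ext N (KMod k d) (n + 1)) := Ext.subsingleton_of_projective _ _ _
    exact ⟨inferInstance, by rw [Module.finrank_zero_of_subsingleton]; simp⟩
  | zero =>
    let ev : (N ⟶ KMod k d) →ₗ[k] k :=
      { toFun := fun g => (g.hom (f 1) : k)
        map_add' := fun g h => rfl
        map_smul' := fun c g => by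
          have h : ∀ y : k, constantCoeff (algebraMap k (MvPolynomial (Fin d) k) c) * y =
            c * y := by simp
          exact h (g.hom (f 1)) }
    have hev : Function.Bijective ev := by
      constructor
      · rw [← LinearMap.ker_eq_bot, LinearMap.ker_eq_bot']
        intro g hg
        ext x
        obtain ⟨p, rfl⟩ := hf.2 x
        have : f p = p • f 1 := by rw [← map_smul]; simp
        rw [this, map_smul]
        have hg' : g.hom (f 1) = 0 := hg
        rw [hg', smul_zero]
        rfl
      · intro c
        refine ⟨ModuleCat.ofHom ((LinearMap.toSpanSingleton (MvPolynomial (Fin d) k)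
          (KMod k d) (show (KMod k d : Type) from c)).comp e.symm.toLinearMap), ?_⟩
        change (LinearMap.toSpanSingleton (MvPolynomial (Fin d) k)
          (KMod k d) (show (KMod k d : Type) from c)) (e.symm (e 1)) = _
        rw [e.symm_apply_apply]
        have h : ∀ y : k, constantCoeff (1 : MvPolynomial (Fin d) k) * y = y := by simp
        exact h c
    let e' := (Ext.linearEquiv₀ (R := k) (X := N) (Y := KMod k d)) ≪≫ₗ
      LinearEquiv.ofBijective ev hev
    exact ⟨Module.Finite.equiv e'.symm, by rw [e'.finrank_eq]; simp⟩

lemma X_mul_mem_iff (s : Finset (Fin d)) (j : Fin d) (hj : j ∉ s)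
    (p : MvPolynomial (Fin d) k)
    (h : X j * p ∈ Ideal.span (X '' (s : Set (Fin d)) : Set (MvPolynomial (Fin d) k))) :
    p ∈ Ideal.span (X '' (s : Set (Fin d)) : Set (MvPolynomial (Fin d) k)) := by
  rw [mem_ideal_span_X_image] at h ⊢
  intro m hm
  obtain ⟨i, his, hi⟩ := h (Finsupp.single j 1 + m) (by
    rw [mem_support_iff, coeff_X_mul]; exact mem_support_iff.1 hm)
  refine ⟨i, his, ?_⟩
  have hij : j ≠ i := by rintro rfl; exact hj his
  simpa [Finsupp.single_apply, hij] using hi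

lemma hasDims_finset (s : Finset (Fin d)) : ∀ (N : ModuleCat.{0} (MvPolynomial (Fin d) k))
    (f : MvPolynomial (Fin d) k →ₗ[MvPolynomial (Fin d) k] N), Function.Surjective f →
    LinearMap.ker f = Ideal.span (X '' (s : Set (Fin d)) : Set (MvPolynomial (Fin d) k)) →
    HasDims k d N s.card := by
  classical
  induction s using Finset.induction_on with
  | empty =>
    intro N f hf hk
    refine hasDims_base k d N f ⟨?_, hf⟩
    rw [← LinearMap.ker_eq_bot, hk]
    simp
  | insert j s hj ih =>
    intro N f hf hk
    let I : Ideal (MvPolynomial (Fin d) k) := Ideal.span (X '' (s : Set (Fin d)))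
    have hI : LinearMap.ker f = Ideal.span {X j} ⊔ I := by
      rw [hk, Finset.coe_insert, Set.image_insert_eq, Ideal.span_insert]
    let M : ModuleCat.{0} (MvPolynomial (Fin d) k) :=
      ModuleCat.of _ (MvPolynomial (Fin d) k ⧸ I)
    have hle : I ≤ LinearMap.ker f := hI ▸ le_sup_right
    let g : (MvPolynomial (Fin d) k ⧸ I) →ₗ[MvPolynomial (Fin d) k] N :=
      Submodule.liftQ I f hle
    have hXj : f (X j) = 0 := by
      rw [← LinearMap.mem_ker, hI]
      exact (le_sup_left : _ ≤ Ideal.span {X j} ⊔ I) (Ideal.subset_span rfl)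
    have hXz : ∀ p, f (X j * p) = 0 := fun p => by
      rw [mul_comm, ← smul_eq_mul, map_smul, hXj, smul_zero]
    let S : ShortComplex (ModuleCat.{0} (MvPolynomial (Fin d) k)) :=
      ShortComplex.mk (X₁ := M) (X₂ := M) (X₃ := N)
        ((X j : MvPolynomial (Fin d) k) • 𝟙 M) (ModuleCat.ofHom g) (by
          refine ModuleCat.hom_ext (LinearMap.ext fun x => ?_)
          obtain ⟨p, rfl⟩ := Submodule.Quotient.mk_surjective _ x
          exact hXz p)
    have hS : S.ShortExact := by
      apply ModuleCat.shortComplex_shortExact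
      · intro x
        obtain ⟨p, rfl⟩ := Submodule.Quotient.mk_surjective _ x
        constructor
        · intro hx
          have hp : p ∈ LinearMap.ker f := hx
          rw [hI, Ideal.mem_span_singleton_sup] at hp
          obtain ⟨a, b, hb, rfl⟩ := hp
          refine ⟨Submodule.Quotient.mk a, ?_⟩
          change Submodule.Quotient.mk (X j * a) = Submodule.Quotient.mk _
          rw [Submodule.Quotient.eq]
          have : X j * a - (a * X j + b) = -b := by ring
          rw [this]
          exact neg_mem hb
        · rintro ⟨y, hy⟩
          rw [← hy]
          obtain ⟨q, rfl⟩ := Submodule.Quotient.mk_surjective _ y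
          exact hXz q
      · refine (injective_iff_map_eq_zero S.f.hom).2 ?_
        intro x hx
        obtain ⟨p, rfl⟩ := Submodule.Quotient.mk_surjective _ x
        have hx' : (Submodule.Quotient.mk (X j * p) : MvPolynomial (Fin d) k ⧸ I) = 0 := hx
        rw [Submodule.Quotient.mk_eq_zero] at hx'
        exact (Submodule.Quotient.mk_eq_zero _).2 (X_mul_mem_iff k d s j hj p hx')
      · intro y
        obtain ⟨p, rfl⟩ := hf y
        exact ⟨Submodule.Quotient.mk p, rfl⟩
    rw [Finset.card_insert_of_notMem hj]
    refine HasDims.step k d hS rfl j (by simp [S]) _ (ih M I.mkQ (Submodule.mkQ_surjective I) ?_)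
    exact Submodule.ker_mkQ I

lemma hasDims_KMod : HasDims k d (KMod k d) d := by
  let f : MvPolynomial (Fin d) k →ₗ[MvPolynomial (Fin d) k] (KMod k d) :=
    { toFun := fun p => (constantCoeff p : k)
      map_add' := fun p q => map_add (constantCoeff (R := k) (σ := Fin d)) p q
      map_smul' := fun p q => map_mul (constantCoeff (R := k) (σ := Fin d)) p q }
  have := hasDims_finset k d Finset.univ (KMod k d) f
    (fun c => ⟨C c, constantCoeff_C (R := k) (Fin d) c⟩) (by
      ext p
      rw [mem_ideal_span_X_image]
      change constantCoeff p = 0 ↔ _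
      constructor
      · intro h m hm
        by_contra! hc
        have : m = 0 := by ext i; exact hc i (by simp)
        subst this
        exact mem_support_iff.1 hm h
      · intro h
        by_contra hc
        obtain ⟨i, -, hi⟩ := h 0 (mem_support_iff.2 hc)
        exact hi rfl)
  simpa using this

end Steps

/-- `Ext^n_B(k, k)` for `B = k[x₁,…,x_d]` and `k` the augmentation module is a
`k`-vector space of dimension `d.choose n`; in particular it vanishes for `n > d`. -/
theorem finrank_ext_polynomial_augmentation (n : ℕ) :
    FiniteDimensional k (((Ext k (ModuleCat (MvPolynomial (Fin d) k)) n).obj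
        (Opposite.op (KMod k d))).obj (KMod k d)) ∧
    Module.finrank k (((Ext k (ModuleCat (MvPolynomial (Fin d) k)) n).obj
        (Opposite.op (KMod k d))).obj (KMod k d)) = d.choose n ∧
    (d < n → Subsingleton (((Ext k (ModuleCat (MvPolynomial (Fin d) k)) n).obj
        (Opposite.op (KMod k d))).obj (KMod k d))) := by
  let e := oldExtEquiv (F := k) (Y := KMod k d) (ProjectiveResolution.of (KMod k d)) n
  obtain ⟨h1, h2⟩ := hasDims_KMod k d n
  refine ⟨Module.Finite.equiv e.symm, by rw [e.finrank_eq, h2], fun hn => ?_⟩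
  rw [Nat.choose_eq_zero_of_lt hn] at h2
  have := Module.finrank_zero_iff.1 h2
  exact e.toEquiv.subsingleton

end
end

section
/- Let $k$ be a field of characteristic zero, $d \ge 1$, $A = \Lambda(k^d)$ the exterior algebra, and let $k$ be the augmentation left $A$-module. Then for every $n \ge 0$ the $k$-vector space $\mathrm{Ext}^n_A(k,k)$ is finite dimensional of dimension $\binom{n+d-1}{d-1}$; in particular $\mathrm{Ext}^n_A(k,k) \neq 0$ for every $n \ge 0$. -/
open CategoryTheory

noncomputable section

variable (k : Type) [Field k] [CharZero k] (d : ℕ)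

/-- The augmentation module structure on `k` over the exterior algebra `Λ(k^d)`:
every element of `k^d` acts by `0`. -/
instance augmentationModuleExt : Module (ExteriorAlgebra k (Fin d → k)) k :=
  ((ExteriorAlgebra.algebraMapInv :
      ExteriorAlgebra k (Fin d → k) →ₐ[k] k) : ExteriorAlgebra k (Fin d → k) →+* k).toModule

/-- The augmentation module `k` as an object of the category of modules over the
exterior algebra `A = Λ(k^d)`. -/
def KModE : ModuleCat (ExteriorAlgebra k (Fin d → k)) :=
  ModuleCat.of (ExteriorAlgebra k (Fin d → k)) k

namespace KoszulExt

set_option linter.unusedSectionVars false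

/-- The exterior algebra. -/
abbrev EA : Type := ExteriorAlgebra k (Fin d → k)

/-- Multi-indices of degree `n`. -/
abbrev Idx (n : ℕ) : Type := {α : Fin d → ℕ // ∑ i, α i = n}

instance idxFinite (n : ℕ) : Finite (Idx d n) :=
  Finite.of_equiv _ (Sym.equivNatSumOfFintype (Fin d) n)

theorem card_idx (hd : 1 ≤ d) (n : ℕ) : Nat.card (Idx d n) = (n + d - 1).choose (d - 1) := by
  rw [← Nat.card_congr (Sym.equivNatSumOfFintype (Fin d) n), Nat.card_eq_fintype_card,
    Sym.card_sym_eq_choose, Fintype.card_fin, add_comm d n]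
  apply Nat.choose_symm_of_eq_add
  omega

/-- Generators of the exterior algebra. -/
def gen (i : Fin d) : EA k d := ExteriorAlgebra.ι k (Pi.single i 1)

theorem gen_anti (i j : Fin d) : gen k d i * gen k d j + gen k d j * gen k d i = 0 :=
  ExteriorAlgebra.ι_add_mul_swap _ _

/-- Right contraction with the dual basis vector. -/
def con (i : Fin d) : EA k d →ₗ[k] EA k d :=
  (CliffordAlgebra.contractRight (Q := (0 : QuadraticForm k (Fin d → k)))).flip
    (LinearMap.proj i)

theorem con_mul_ι (i : Fin d) (a : EA k d) (v : Fin d → k) :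
    con k d i (a * ExteriorAlgebra.ι k v) = v i • a - con k d i a * ExteriorAlgebra.ι k v :=
  CliffordAlgebra.contractRight_mul_ι (Q := (0 : QuadraticForm k (Fin d → k)))
    (d := LinearMap.proj i) v a

theorem con_algebraMap (i : Fin d) (r : k) : con k d i (algebraMap k (EA k d) r) = 0 :=
  CliffordAlgebra.contractRight_algebraMap (0 : QuadraticForm k (Fin d → k))
    (LinearMap.proj i) r

theorem con_mul_gen (i j : Fin d) (a : EA k d) :
    con k d j (a * gen k d i) = (if j = i then a else 0) - con k d j a * gen k d i := by
  rw [gen, con_mul_ι, Pi.single_apply]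
  split_ifs <;> simp

/-- The number operator. -/
def num : EA k d →ₗ[k] EA k d :=
  ∑ i, (LinearMap.mulRight k (gen k d i)) ∘ₗ con k d i

theorem num_apply (a : EA k d) : num k d a = ∑ i, con k d i a * gen k d i := by
  simp [num]

theorem sum_gen (v : Fin d → k) : ∑ i, v i • gen k d i = ExteriorAlgebra.ι k v := by
  simp only [gen, ← map_smul, ← map_sum]
  congr 1
  ext j
  simp [Finset.sum_apply, Pi.single_apply]

theorem num_mul_ι (a : EA k d) (v : Fin d → k) :
    num k d (a * ExteriorAlgebra.ι k v) =
      num k d a * ExteriorAlgebra.ι k v + a * ExteriorAlgebra.ι k v := by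
  simp only [num_apply, con_mul_ι, sub_mul, Finset.sum_sub_distrib, smul_mul_assoc]
  have h1 : ∑ i, v i • (a * gen k d i) = a * ExteriorAlgebra.ι k v := by
    rw [← sum_gen, Finset.mul_sum]
    simp
  have h2 : ∑ i, con k d i a * ExteriorAlgebra.ι k v * gen k d i =
      - ((∑ i, con k d i a * gen k d i) * ExteriorAlgebra.ι k v) := by
    rw [Finset.sum_mul, ← Finset.sum_neg_distrib]
    refine Finset.sum_congr rfl fun i _ => ?_
    rw [mul_assoc, mul_assoc, ← mul_neg]
    congr 1
    exact eq_neg_of_add_eq_zero_left (ExteriorAlgebra.ι_add_mul_swap _ _)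
  rw [h1, h2]
  abel

theorem num_mul_gen (a : EA k d) (i : Fin d) :
    num k d (a * gen k d i) = num k d a * gen k d i + a * gen k d i := num_mul_ι k d a _

theorem ea_right_induction {P : EA k d → Prop} (h0 : ∀ r : k, P (algebraMap _ _ r))
    (hadd : ∀ x y, P x → P y → P (x + y))
    (hmul : ∀ m x, P x → P (x * ExteriorAlgebra.ι k m)) : ∀ x, P x :=
  CliffordAlgebra.right_induction (Q := (0 : QuadraticForm k (Fin d → k))) h0 hadd hmul

theorem mem_iSup_eigen (a : EA k d) :
    a ∈ ⨆ p : ℕ, Module.End.eigenspace (num k d) (p : k) := by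
  induction a using ea_right_induction with
  | h0 r =>
    apply Submodule.mem_iSup_of_mem 0
    simp [num_apply, con_algebraMap]
  | hadd x y hx hy => exact add_mem hx hy
  | hmul m x hx =>
    induction hx using Submodule.iSup_induction' with
    | mem p x hx =>
      apply Submodule.mem_iSup_of_mem (p + 1)
      rw [Module.End.mem_eigenspace_iff] at hx ⊢
      rw [num_mul_ι, hx]
      push_cast
      rw [add_smul, one_smul, smul_mul_assoc]
    | zero => simp
    | add x y _ _ hx hy => rw [add_mul]; exact add_mem hx hy

instance ea_finite : FiniteDimensional k (EA k d) :=
  Module.Finite.of_basis (Pi.basisFun k (Fin d)).ExteriorAlgebra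

theorem num_add_surj (n : ℕ) :
    Function.Surjective (fun a : EA k d => ((n + 1 : ℕ) : k) • a + num k d a) := by
  let f : EA k d →ₗ[k] EA k d := ((n + 1 : ℕ) : k) • LinearMap.id + num k d
  change Function.Surjective f
  intro a
  have ha := mem_iSup_eigen k d a
  change a ∈ LinearMap.range f
  refine (iSup_le ?_ : _ ≤ LinearMap.range f) ha
  intro p x hx
  rw [Module.End.mem_eigenspace_iff] at hx
  have hne : ((n + 1 : ℕ) : k) + (p : k) ≠ 0 := by
    norm_cast
    omega
  refine ⟨(((n + 1 : ℕ) : k) + (p : k))⁻¹ • x, ?_⟩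
  rw [map_smul]
  simp only [f, LinearMap.add_apply, LinearMap.smul_apply, LinearMap.id_apply, hx]
  rw [← add_smul, smul_smul, inv_mul_cancel₀ hne, one_smul]

theorem num_add_inj (n : ℕ) :
    Function.Injective (fun a : EA k d => ((n + 1 : ℕ) : k) • a + num k d a) := by
  let f : EA k d →ₗ[k] EA k d := ((n + 1 : ℕ) : k) • LinearMap.id + num k d
  exact (LinearMap.injective_iff_surjective (f := f)).2 (num_add_surj k d n)

/-- Raising a multi-index. -/
def up {n : ℕ} (β : Idx d n) (i : Fin d) : Idx d (n + 1) :=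
  ⟨β.1 + Pi.single i 1, by simp [Finset.sum_add_distrib, β.2]⟩

theorem up_comm {n : ℕ} (β : Idx d n) (i j : Fin d) :
    up d (up d β i) j = up d (up d β j) i := by
  apply Subtype.ext
  simp only [up]
  abel

/-- The differential of the resolution. -/
def dif (n : ℕ) : (Idx d (n + 1) → EA k d) →ₗ[EA k d] (Idx d n → EA k d) where
  toFun f β := ∑ i, f (up d β i) * gen k d i
  map_add' f g := by
    ext β
    simp [add_mul, Finset.sum_add_distrib]
  map_smul' a f := by
    ext β
    simp [Finset.mul_sum, mul_assoc]

theorem dif_apply (n : ℕ) (f : Idx d (n + 1) → EA k d) (β : Idx d n) :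
    dif k d n f β = ∑ i, f (up d β i) * gen k d i := rfl

theorem dif_dif (n : ℕ) (f : Idx d (n + 2) → EA k d) : dif k d n (dif k d (n + 1) f) = 0 := by
  ext β
  simp only [dif_apply, Pi.zero_apply, Finset.sum_mul]
  set S := ∑ i, ∑ j, f (up d (up d β i) j) * gen k d j * gen k d i with hS
  have h : S + S = 0 := by
    conv_lhs => enter [2]; rw [hS, Finset.sum_comm]
    rw [hS, ← Finset.sum_add_distrib]
    refine Finset.sum_eq_zero fun i _ => ?_
    rw [← Finset.sum_add_distrib]
    refine Finset.sum_eq_zero fun j _ => ?_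
    rw [up_comm d β j i, mul_assoc, mul_assoc, ← mul_add, gen_anti, mul_zero]
  have h2 : (2 : k) • S = 0 := by rw [two_smul]; exact h
  exact (smul_eq_zero.1 h2).resolve_left two_ne_zero

/-- Extension by zero. -/
def ext0 {n : ℕ} (f : Idx d n → EA k d) (γ : Fin d → ℕ) : EA k d :=
  open Classical in if h : ∑ i, γ i = n then f ⟨γ, h⟩ else 0

theorem ext0_coe {n : ℕ} (f : Idx d n → EA k d) (γ : Idx d n) : ext0 k d f γ.1 = f γ := by
  simp [ext0, γ.2]

/-- The contracting homotopy. -/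
def hom {n : ℕ} (f : Idx d n → EA k d) (α : Idx d (n + 1)) : EA k d :=
  ∑ j, α.1 j • con k d j (ext0 k d f (α.1 - Pi.single j 1))

theorem dif_hom (n : ℕ) (z : Idx d (n + 1) → EA k d) (hz : dif k d n z = 0)
    (β : Idx d (n + 1)) :
    dif k d (n + 1) (hom k d z) β = ((n + 1 : ℕ) : k) • z β + num k d (z β) := by
  have key : ∀ j, β.1 j • ∑ i, con k d j (ext0 k d z (β.1 + Pi.single i 1 - Pi.single j 1)) *
      gen k d i = β.1 j • z β := by
    intro j
    by_cases hj : β.1 j = 0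
    · simp [hj]
    congr 1
    have hle : Pi.single j 1 ≤ β.1 := by
      intro i
      by_cases hi : i = j
      · subst hi; simp; omega
      · simp [hi]
    have hs : ∑ i, (β.1 - Pi.single j 1 : Fin d → ℕ) i = n := by
      have h1 : ∑ i, (β.1 - Pi.single j 1 + Pi.single j 1 : Fin d → ℕ) i = n + 1 := by
        rw [tsub_add_cancel_of_le hle]; exact β.2
      simpa [Finset.sum_add_distrib] using h1
    have h0 := congrFun hz ⟨β.1 - Pi.single j 1, hs⟩
    rw [dif_apply] at h0
    have h1 := congrArg (con k d j) h0
    simp only [map_sum, con_mul_gen, Finset.sum_sub_distrib, Pi.zero_apply, map_zero,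
      Finset.sum_ite_eq, Finset.mem_univ, if_true] at h1
    have h2 : up d (⟨β.1 - Pi.single j 1, hs⟩ : Idx d n) j = β :=
      Subtype.ext (tsub_add_cancel_of_le hle)
    rw [h2] at h1
    rw [sub_eq_zero] at h1
    rw [h1]
    refine Finset.sum_congr rfl fun i _ => ?_
    rw [← ext0_coe k d z (up d _ i)]
    simp only [up]
    rw [tsub_add_eq_add_tsub hle]
  rw [dif_apply]
  simp only [hom, Finset.sum_mul]
  rw [Finset.sum_comm]
  have step : ∀ j, ∑ i, ((up d β i).1 j • con k d j
      (ext0 k d z ((up d β i).1 - Pi.single j 1))) * gen k d i =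
      β.1 j • z β + con k d j (z β) * gen k d j := by
    intro j
    rw [← key j, Finset.smul_sum]
    have : con k d j (z β) * gen k d j = ∑ i, if i = j then
        con k d j (ext0 k d z (β.1 + Pi.single i 1 - Pi.single j 1)) * gen k d i else 0 := by
      simp [ext0_coe]
    rw [this, ← Finset.sum_add_distrib]
    refine Finset.sum_congr rfl fun i _ => ?_
    by_cases hi : i = j
    · subst hi
      simp [up, add_smul, add_mul, mul_assoc]
    · simp [up, hi, Ne.symm hi, mul_assoc]
  rw [Finset.sum_congr rfl fun j _ => step j, Finset.sum_add_distrib, ← Finset.sum_smul, β.2,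
    num_apply, Nat.cast_smul_eq_nsmul]

theorem dif_exact (n : ℕ) (z : Idx d (n + 1) → EA k d) (hz : dif k d n z = 0) :
    ∃ w, dif k d (n + 1) w = z := by
  let D : (Idx d (n + 1) → EA k d) →ₗ[k] (Idx d n → EA k d) := (dif k d n).restrictScalars k
  let F : (Idx d (n + 1) → EA k d) →ₗ[k] (Idx d (n + 1) → EA k d) :=
    ((n + 1 : ℕ) : k) • LinearMap.id + LinearMap.pi fun β => num k d ∘ₗ LinearMap.proj β
  have hF : ∀ f β, F f β = ((n + 1 : ℕ) : k) • f β + num k d (f β) := fun f β => rfl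
  have hDF : ∀ f ∈ LinearMap.ker D, F f ∈ LinearMap.ker D := by
    intro f hf
    have hf0 : dif k d n f = 0 := hf
    change dif k d n (F f) = 0
    ext β
    have h := congrFun hf0 β
    rw [dif_apply, Pi.zero_apply] at h
    have h2 := congrArg (num k d) h
    rw [map_sum, map_zero] at h2
    simp only [num_mul_gen, Finset.sum_add_distrib, h, add_zero] at h2
    simp only [dif_apply, hF, add_mul, Finset.sum_add_distrib, smul_mul_assoc,
      ← Finset.smul_sum, h, h2, Pi.zero_apply, smul_zero, add_zero]
  let G : LinearMap.ker D →ₗ[k] LinearMap.ker D := F.restrict hDF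
  have hG : Function.Injective G := by
    intro x y hxy
    apply Subtype.ext
    have h := congrArg Subtype.val hxy
    ext β
    exact num_add_inj k d n (congrFun h β)
  have hGs := LinearMap.injective_iff_surjective.1 hG
  obtain ⟨w, hw⟩ := hGs ⟨z, hz⟩
  refine ⟨hom k d w.1, ?_⟩
  ext β
  rw [dif_hom k d n w.1 w.2]
  exact congrFun (congrArg Subtype.val hw) β

/-- The augmentation. -/
def aug : EA k d →ₐ[k] k := ExteriorAlgebra.algebraMapInv

theorem aug_gen (i : Fin d) : aug k d (gen k d i) = 0 := by
  simp [aug, gen, ExteriorAlgebra.algebraMapInv]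

theorem smul_k_eq (a : EA k d) (x : k) : a • x = aug k d a * x := rfl

/-- The unique multi-index of degree zero. -/
def idx0 : Idx d 0 := ⟨0, by simp⟩

theorem idx0_eq (β : Idx d 0) : β = idx0 d := by
  apply Subtype.ext
  ext i
  have := β.2
  simp only [Finset.sum_eq_zero_iff, Finset.mem_univ, true_imp_iff] at this
  simp [idx0, this i]

/-- The augmentation as a map from the degree zero term. -/
def augMap : (Idx d 0 → EA k d) →ₗ[EA k d] k where
  toFun f := aug k d (f (idx0 d))
  map_add' f g := by simp
  map_smul' a f := by simp [smul_k_eq]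

theorem augMap_dif (f : Idx d 1 → EA k d) : augMap k d (dif k d 0 f) = 0 := by
  change aug k d (dif k d 0 f (idx0 d)) = 0
  simp [dif_apply, aug_gen]

theorem augMap_surj : Function.Surjective (augMap k d) := by
  intro r
  refine ⟨fun _ => algebraMap k (EA k d) r, ?_⟩
  change aug k d (algebraMap k (EA k d) r) = r
  simp

theorem aux_range (a : EA k d) :
    ∃ w : Idx d 1 → EA k d, dif k d 0 w (idx0 d) = a - algebraMap k (EA k d) (aug k d a) := by
  induction a using ea_right_induction with
  | h0 r => exact ⟨0, by simp⟩
  | hadd x y hx hy =>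
    obtain ⟨u, hu⟩ := hx
    obtain ⟨v, hv⟩ := hy
    refine ⟨u + v, ?_⟩
    rw [map_add, Pi.add_apply, hu, hv, map_add, map_add]
    abel
  | hmul m x _ =>
    refine ⟨fun α => (∑ j, (α.1 j : k) * m j) • x, ?_⟩
    have h0 : aug k d (ExteriorAlgebra.ι k m) = 0 := by
      simp [aug, ExteriorAlgebra.algebraMapInv]
    rw [map_mul, h0, mul_zero, map_zero, sub_zero, ← sum_gen, Finset.mul_sum, dif_apply]
    refine Finset.sum_congr rfl fun i _ => ?_
    have : ∑ j, ((up d (idx0 d) i).1 j : k) * m j = m i := by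
      simp [up, idx0, Pi.single_apply]
    rw [this]
    simp

theorem augMap_exact (f : Idx d 0 → EA k d) (hf : augMap k d f = 0) :
    ∃ w, dif k d 0 w = f := by
  obtain ⟨w, hw⟩ := aux_range k d (f (idx0 d))
  have h : aug k d (f (idx0 d)) = 0 := hf
  refine ⟨w, ?_⟩
  ext β
  rw [idx0_eq d β, hw, h, map_zero, sub_zero]

/-- The terms of the resolution. -/
def obj (n : ℕ) : ModuleCat (EA k d) := ModuleCat.of (EA k d) (Idx d n → EA k d)

/-- The differentials of the resolution. -/
def dmap (n : ℕ) : obj k d (n + 1) ⟶ obj k d n := ModuleCat.ofHom (dif k d n)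

/-- The underlying complex of the resolution. -/
def cplx : ChainComplex (ModuleCat (EA k d)) ℕ :=
  ChainComplex.of (obj k d) (dmap k d) (by
    intro n
    ext f : 2
    exact dif_dif k d n f)

theorem cplx_d (n : ℕ) : (cplx k d).d (n + 1) n = dmap k d n := ChainComplex.of_d _ _ _

instance obj_projective (n : ℕ) : Projective (obj k d n) := by
  have : Module.Projective (EA k d) (Idx d n → EA k d) := by
    have := Fintype.ofFinite (Idx d n)
    infer_instance
  exact (IsProjective.iff_projective _).1 this

/-- The augmentation as a morphism. -/
def augHom : obj k d 0 ⟶ KModE k d := ModuleCat.ofHom (augMap k d)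

theorem dmap_augHom : dmap k d 0 ≫ augHom k d = 0 := by
  ext f : 2
  exact augMap_dif k d f

theorem exact0 : (ShortComplex.mk _ _ (dmap_augHom k d)).Exact := by
  rw [ShortComplex.moduleCat_exact_iff]
  intro x hx
  exact augMap_exact k d x hx

instance augHom_epi : Epi (augHom k d) :=
  (ModuleCat.epi_iff_surjective _).2 (augMap_surj k d)

theorem cplx_exactAt (n : ℕ) : (cplx k d).ExactAt (n + 1) := by
  rw [HomologicalComplex.exactAt_iff' _ (n + 1 + 1) (n + 1) n (by simp) (by simp),
    ShortComplex.moduleCat_exact_iff]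
  intro x hx
  have hx' : (dmap k d n) x = 0 := by
    rw [← cplx_d]; exact hx
  obtain ⟨w, hw⟩ := dif_exact k d n x hx'
  refine ⟨w, ?_⟩
  change (cplx k d).d (n + 1 + 1) (n + 1) w = x
  rw [cplx_d]
  exact hw

/-- The resolution. -/
def res : ProjectiveResolution (KModE k d) where
  complex := cplx k d
  projective n := obj_projective k d n
  π := (ChainComplex.toSingle₀Equiv _ _).symm ⟨augHom k d, by
    rw [cplx_d]; exact dmap_augHom k d⟩
  quasiIso := ⟨fun n => by
    cases n
    · rw [ChainComplex.quasiIsoAt₀_iff, ShortComplex.quasiIso_iff_of_zeros']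
      · refine (ShortComplex.exact_and_epi_g_iff_of_iso ?_).2
          ⟨exact0 k d, augHom_epi k d⟩
        exact ShortComplex.isoMk (Iso.refl _) (Iso.refl _) (Iso.refl _)
          (by simp; exact (cplx_d k d 0).symm) (by simp; rfl)
      all_goals rfl
    · rw [quasiIsoAt_iff_exactAt']
      · apply cplx_exactAt
      · apply ChainComplex.exactAt_succ_single_obj⟩

theorem lin_formula (n : ℕ) [Fintype (Idx d n)] [DecidableEq (Idx d n)]
    (f : (Idx d n → EA k d) →ₗ[EA k d] k) (x : Idx d n → EA k d) :
    f x = ∑ α, aug k d (x α) * f (Pi.single α 1) := by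
  conv_lhs => rw [← Finset.univ_sum_single x, map_sum]
  refine Finset.sum_congr rfl fun α _ => ?_
  rw [← smul_k_eq, ← map_smul]
  congr 1
  ext β
  by_cases h : β = α
  · subst h; simp
  · simp [h]

/-- Homs from the terms of the resolution, unbundled. -/
def linEquiv (n : ℕ) [Fintype (Idx d n)] [DecidableEq (Idx d n)] :
    ((Idx d n → EA k d) →ₗ[EA k d] k) ≃ (Idx d n → k) where
  toFun f α := f (Pi.single α 1)
  invFun g :=
    { toFun := fun x => ∑ α, aug k d (x α) * g α
      map_add' := fun x y => by simp [add_mul, Finset.sum_add_distrib]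
      map_smul' := fun a x => by
        simp [smul_k_eq, Finset.mul_sum, mul_assoc] }
  left_inv f := by
    apply LinearMap.ext
    intro x
    exact (lin_formula k d n f x).symm
  right_inv g := by
    ext α
    change ∑ β, aug k d ((Pi.single α 1 : Idx d n → EA k d) β) * g β = g α
    rw [Finset.sum_eq_single α]
    · simp
    · intro β _ h
      simp [h]
    · simp

/-- Homs from the terms of the resolution. -/
def homEquiv (n : ℕ) : (obj k d n ⟶ KModE k d) ≃ₗ[k] (Idx d n → k) := by
  classical
  have := Fintype.ofFinite (Idx d n)
  exact
  { toFun := fun f => linEquiv k d n f.hom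
    map_add' := fun f g => by ext α; rfl
    map_smul' := fun c f => by
      ext α
      change aug k d (algebraMap k (EA k d) c) * (linEquiv k d n f.hom α) =
        c * (linEquiv k d n f.hom α)
      simp
    invFun := fun g => ModuleCat.ofHom ((linEquiv k d n).symm g)
    left_inv := fun f => by
      apply ModuleCat.hom_ext
      exact (linEquiv k d n).symm_apply_apply f.hom
    right_inv := fun g => (linEquiv k d n).apply_symm_apply g }

theorem aug_dif (n : ℕ) (x : Idx d (n + 1) → EA k d) (α : Idx d n) :
    aug k d (dif k d n x α) = 0 := by
  simp [dif_apply, aug_gen]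

theorem dmap_comp (n : ℕ) (f : obj k d n ⟶ KModE k d) : dmap k d n ≫ f = 0 := by
  classical
  have := Fintype.ofFinite (Idx d n)
  ext x : 2
  refine (lin_formula k d n f.hom (dif k d n x)).trans ?_
  refine Finset.sum_eq_zero fun α _ => ?_
  exact (congrArg (· * _) (aug_dif k d n x α)).trans (zero_mul _)

/-- The Hom complex. -/
def homCplx : CochainComplex (ModuleCat k) ℕ := (cplx k d).linearYonedaObj k (KModE k d)

theorem homCplx_d (i j : ℕ) : (homCplx k d).d i j = 0 := by
  by_cases h : i + 1 = j
  · subst h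
    ext f
    change (cplx k d).d (i + 1) i ≫ f = 0
    rw [cplx_d]
    exact dmap_comp k d i f
  · exact (homCplx k d).shape _ _ h

/-- Ext computed. -/
def extEquiv (n : ℕ) : (((Ext k (ModuleCat (ExteriorAlgebra k (Fin d → k))) n).obj
        (Opposite.op (KModE k d))).obj (KModE k d)) ≃ₗ[k] (Idx d n → k) :=
  ((res k d).isoExt (R := k) n (KModE k d) ≪≫
    (ShortComplex.HomologyData.ofZeros ((homCplx k d).sc n)
      (homCplx_d k d _ _) (homCplx_d k d _ _)).left.homologyIso).toLinearEquiv ≪≫ₗ homEquiv k d n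

end KoszulExt

/-- For `d ≥ 1`, `Ext^n_A(k, k)` for `A = Λ(k^d)` and `k` the augmentation module is a
`k`-vector space of dimension `(n + d - 1).choose (d - 1)`; in particular it is nonzero
for every `n ≥ 0`. -/
theorem finrank_ext_exteriorAlgebra_augmentation (hd : 1 ≤ d) (n : ℕ) :
    FiniteDimensional k (((Ext k (ModuleCat (ExteriorAlgebra k (Fin d → k))) n).obj
        (Opposite.op (KModE k d))).obj (KModE k d)) ∧
    Module.finrank k (((Ext k (ModuleCat (ExteriorAlgebra k (Fin d → k))) n).obj
        (Opposite.op (KModE k d))).obj (KModE k d)) = (n + d - 1).choose (d - 1) ∧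
    Nontrivial (((Ext k (ModuleCat (ExteriorAlgebra k (Fin d → k))) n).obj
        (Opposite.op (KModE k d))).obj (KModE k d)) := by
  have e := KoszulExt.extEquiv k d n
  have hfin : Module.finrank k (((Ext k (ModuleCat (ExteriorAlgebra k (Fin d → k))) n).obj
        (Opposite.op (KModE k d))).obj (KModE k d)) = (n + d - 1).choose (d - 1) := by
    have := Fintype.ofFinite (KoszulExt.Idx d n)
    rw [e.finrank_eq, Module.finrank_fintype_fun_eq_card, ← Nat.card_eq_fintype_card,
      KoszulExt.card_idx d hd n]
  refine ⟨Module.Finite.equiv e.symm, hfin, ?_⟩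
  apply Module.nontrivial_of_finrank_pos (R := k)
  rw [hfin]
  exact Nat.choose_pos (by omega)

end
end

section
/- ($G_2$-invariance of the 4-colored propagator functions.) Let $z, w \in \mathbb{H}$ with $z \neq w$, $x \in \mathbb{R}$, $\lambda \in \mathbb{R}$ with $\lambda > 0$, and $\mu \in \mathbb{R}$. Then $\eta^{+,-}(\lambda z + \mu,\, \lambda w + \mu,\, \lambda x + \mu) = \eta^{+,-}(z,w,x)$ and $\eta^{-,+}(\lambda z + \mu,\, \lambda w + \mu,\, \lambda x + \mu) = \eta^{-,+}(z,w,x)$. (Hence the 4-colored propagators descend to the quotient configuration space $C_{2,1}$.) -/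
/-- The principal complex square root. -/
noncomputable def csqrt (z : ℂ) : ℂ := z ^ (1 / 2 : ℂ)

/-- Cattaneo–Felder's 4-colored propagator function `η^{+,-}`. -/
noncomputable def etaPM (z w : ℂ) (x : ℝ) : ℂ :=
  ((csqrt (z - x) - csqrt (w - x)) * (csqrt (z - x) + (starRingEnd ℂ) (csqrt (w - x)))) /
    ((csqrt (z - x) - (starRingEnd ℂ) (csqrt (w - x))) * (csqrt (z - x) + csqrt (w - x)))

/-- Cattaneo–Felder's 4-colored propagator function `η^{-,+}`. -/
noncomputable def etaMP (z w : ℂ) (x : ℝ) : ℂ :=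
  ((csqrt (z - x) - csqrt (w - x)) * (csqrt (z - x) - (starRingEnd ℂ) (csqrt (w - x)))) /
    ((csqrt (z - x) + (starRingEnd ℂ) (csqrt (w - x))) * (csqrt (z - x) + csqrt (w - x)))

/-- `G₂`-invariance of the 4-colored propagator functions: they are invariant under the
simultaneous action `(z, w, x) ↦ (λz + μ, λw + μ, λx + μ)` for `λ > 0`, `μ ∈ ℝ`. -/
theorem etaPM_etaMP_G2_invariant
    (z w : ℂ) (hz : 0 < z.im) (hw : 0 < w.im) (hzw : z ≠ w)
    (x : ℝ) (lam : ℝ) (hlam : 0 < lam) (mu : ℝ) :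
    etaPM ((lam : ℂ) * z + (mu : ℂ)) ((lam : ℂ) * w + (mu : ℂ)) (lam * x + mu) = etaPM z w x ∧
    etaMP ((lam : ℂ) * z + (mu : ℂ)) ((lam : ℂ) * w + (mu : ℂ)) (lam * x + mu) = etaMP z w x := by
  have key : ∃ s : ℝ, (s : ℂ) ≠ 0 ∧ ∀ u : ℂ, u ≠ 0 → csqrt ((lam : ℂ) * u) = s * csqrt u := by
    refine ⟨Real.exp (Real.log lam * (1 / 2)), ?_, ?_⟩
    · exact_mod_cast (Real.exp_pos _).ne'
    · intro u hu
      have hl : (lam : ℂ) ≠ 0 := by exact_mod_cast hlam.ne'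
      unfold csqrt
      rw [Complex.cpow_def_of_ne_zero (mul_ne_zero hl hu), Complex.cpow_def_of_ne_zero hu,
        Complex.log_ofReal_mul hlam hu, add_mul, Complex.exp_add]
      push_cast
      rfl
  obtain ⟨s, hs, key⟩ := key
  have sub : ∀ v : ℂ, 0 < v.im →
      csqrt ((lam : ℂ) * v + (mu : ℂ) - ((lam * x + mu : ℝ) : ℂ)) = s * csqrt (v - x) := by
    intro v hv
    rw [← key]
    · congr 1
      push_cast
      ring
    · intro h
      have := congrArg Complex.im h
      simp at this
      exact hv.ne' this
  unfold etaPM etaMP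
  rw [sub z hz, sub w hw, map_mul, Complex.conj_ofReal]
  simp only [← mul_sub, ← mul_add]
  constructor
  · rw [mul_mul_mul_comm, mul_mul_mul_comm (s : ℂ) _ (s : ℂ), mul_div_mul_left _ _ (mul_ne_zero hs hs)]
  · rw [mul_mul_mul_comm, mul_mul_mul_comm (s : ℂ) _ (s : ℂ), mul_div_mul_left _ _ (mul_ne_zero hs hs)]
end

section
/- (Restriction of $\omega^{+,-}$ to the boundary stratum $\gamma$ reproduces the 2-colored propagator $\omega^-$.) Let $\tilde{z}, \tilde{w} \in \mathbb{H}$ with $\tilde{z} \neq \tilde{w}$, and let $x, y \in \mathbb{R}$ with $y > x$. Then $\lim_{\varepsilon \to 0^+} \eta^{+,-}\big(y + \varepsilon \tilde{z},\; y + \varepsilon \tilde{w},\; x\big) = \dfrac{\tilde{w} - \tilde{z}}{\overline{\tilde{w}} - \tilde{z}}$, i.e. the limit is exactly the argument function of Kontsevich's propagator $\omega^-$, namely the function whose $\frac{1}{2\pi}\arg$ is $\varphi^-(\tilde z,\tilde w) = \varphi^+(\tilde w, \tilde z)$. -/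
/-- Restriction of `ω^{+,-}` to the boundary stratum `γ` reproduces the 2-colored propagator
`ω^-`: for `z̃ ≠ w̃` in the open upper half-plane and reals `x < y`, as `ε → 0⁺`,
`η^{+,-}(y + ε z̃, y + ε w̃, x)` tends to `(w̃ - z̃)/(conj w̃ - z̃)`, the argument function of
Kontsevich's propagator `ω^-`. -/
theorem etaPM_tendsto_two_colored_propagator_on_gamma
    (zt wt : ℂ) (hz : 0 < zt.im) (hw : 0 < wt.im) (hne : zt ≠ wt)
    (x y : ℝ) (hxy : x < y) :
    Filter.Tendsto
      (fun ε : ℝ => etaPM ((y : ℂ) + (ε : ℂ) * zt) ((y : ℂ) + (ε : ℂ) * wt) x)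
      (nhdsWithin 0 (Set.Ioi 0))
      (nhds ((wt - zt) / ((starRingEnd ℂ) wt - zt))) := by
  have hd : (0 : ℝ) < y - x := sub_pos.mpr hxy
  have hsq : ∀ u : ℂ, csqrt u * csqrt u = u := by
    intro u
    have h := Complex.cpow_nat_inv_pow u (n := 2) (by norm_num)
    unfold csqrt
    rw [← pow_two]
    simpa using h
  obtain ⟨s, hs, hs0⟩ : ∃ s : ℝ, csqrt ((y : ℂ) - x) = (s : ℂ) ∧ s ≠ 0 := by
    refine ⟨(y - x) ^ (1 / 2 : ℝ), ?_, (Real.rpow_pos_of_pos hd _).ne'⟩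
    rw [Complex.ofReal_cpow hd.le]
    simp [csqrt]
  have hlim : ∀ u : ℂ, Filter.Tendsto (fun ε : ℝ => csqrt ((y : ℂ) + (ε : ℂ) * u - x))
      (nhdsWithin 0 (Set.Ioi 0)) (nhds (s : ℂ)) := by
    intro u
    have hc : ContinuousAt (fun ε : ℝ => csqrt ((y : ℂ) + (ε : ℂ) * u - x)) 0 := by
      unfold csqrt
      refine ContinuousAt.cpow (by fun_prop) continuousAt_const ?_
      left
      simpa using hxy
    have h := hc.tendsto
    simp only [Complex.ofReal_zero, zero_mul, add_zero, hs] at h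
    exact h.mono_left nhdsWithin_le_nhds
  have hsC : (s : ℂ) + s ≠ 0 := by
    rw [← two_mul]
    exact mul_ne_zero two_ne_zero (by exact_mod_cast hs0)
  have ha := hlim zt
  have hb := hlim wt
  have hbc : Filter.Tendsto
      (fun ε : ℝ => (starRingEnd ℂ) (csqrt ((y : ℂ) + (ε : ℂ) * wt - x)))
      (nhdsWithin 0 (Set.Ioi 0)) (nhds (s : ℂ)) := by
    have h := (Complex.continuous_conj.tendsto (s : ℂ)).comp hb
    rw [Complex.conj_ofReal] at h
    exact h
  have hab := ha.add hb
  have habc := ha.add hbc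
  have hden : (starRingEnd ℂ) wt - zt ≠ 0 := by
    intro h
    have := congrArg Complex.im h
    simp at this
    linarith
  have hmain := ((habc.div hab hsC).pow 2).const_mul ((wt - zt) / ((starRingEnd ℂ) wt - zt))
  rw [div_self hsC, one_pow, mul_one] at hmain
  refine hmain.congr' ?_
  filter_upwards [hab.eventually_ne hsC, habc.eventually_ne hsC, self_mem_nhdsWithin]
    with ε h1 h2 hε
  have hε0 : (ε : ℂ) ≠ 0 := by exact_mod_cast (ne_of_gt hε)
  unfold etaPM
  have qa := hsq ((y : ℂ) + (ε : ℂ) * zt - x)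
  have qb := hsq ((y : ℂ) + (ε : ℂ) * wt - x)
  have qc := congrArg (starRingEnd ℂ) qb
  simp only [map_mul, map_sub, map_add, Complex.conj_ofReal] at qc
  simp only [Pi.div_apply]
  generalize csqrt ((y : ℂ) + (ε : ℂ) * zt - x) = a at *
  generalize (starRingEnd ℂ) (csqrt ((y : ℂ) + (ε : ℂ) * wt - x)) = c at *
  generalize csqrt ((y : ℂ) + (ε : ℂ) * wt - x) = b at *
  generalize (starRingEnd ℂ) wt = wc at *
  have e1 : (a - b) * (a + b) = ε * (zt - wt) := by linear_combination qa - qb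
  have e2 : (a - c) * (a + c) = ε * (zt - wc) := by linear_combination qa - qc
  have hac : a - c ≠ 0 := by
    intro h
    rw [h, zero_mul] at e2
    rcases mul_eq_zero.mp e2.symm with h' | h'
    · exact hε0 h'
    · exact hden (by linear_combination -h')
  rw [div_pow, div_mul_div_comm, div_eq_div_iff
    (mul_ne_zero hden (pow_ne_zero 2 h1)) (mul_ne_zero hac h1)]
  apply mul_left_cancel₀ hε0
  linear_combination -(a + c) * (a + b) * ((a - b) * (a + b) * (e2) - (a - c) * (a + c) * e1)
end

section
/- (Restriction of $\omega^{-,+}$ to the boundary stratum $\beta$ reproduces the 2-colored propagator $\omega^-$.) Let $\tilde{z}, \tilde{w} \in \mathbb{H}$ with $\tilde{z} \neq \tilde{w}$, and let $x, y \in \mathbb{R}$ with $y < x$. Then $\lim_{\varepsilon \to 0^+} \eta^{-,+}\big(y + \varepsilon \tilde{z},\; y + \varepsilon \tilde{w},\; x\big) = \dfrac{\tilde{w} - \tilde{z}}{\overline{\tilde{w}} - \tilde{z}}$, i.e. the limit is exactly the argument function of Kontsevich's propagator $\omega^-$, namely the function whose $\frac{1}{2\pi}\arg$ is $\varphi^-(\tilde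 z,\tilde w) = \varphi^+(\tilde w, \tilde z)$. -/
theorem csqrt_sq_aux (z : ℂ) : csqrt z ^ 2 = z := by
  unfold csqrt
  have := Complex.cpow_nat_inv_pow z (n := 2) (by norm_num)
  simpa using this

theorem csqrt_tendsto_aux (zt : ℂ) (hz : 0 < zt.im) (x y : ℝ) (hxy : y < x) :
    Filter.Tendsto (fun ε : ℝ => csqrt ((y : ℂ) + (ε : ℂ) * zt - x))
      (nhdsWithin 0 (Set.Ioi 0)) (nhds (csqrt ((y : ℂ) - x))) := by
  have hne : ((y : ℂ) - x) ≠ 0 := by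
    intro h
    have := congrArg Complex.re h
    simp at this
    linarith
  have hlog := Complex.continuousWithinAt_log_of_re_neg_of_im_zero (z := (y : ℂ) - x)
    (by simpa using hxy) (by simp)
  have hin : Filter.Tendsto (fun ε : ℝ => (y : ℂ) + (ε : ℂ) * zt - x)
      (nhdsWithin 0 (Set.Ioi 0)) (nhdsWithin ((y : ℂ) - x) {z : ℂ | 0 ≤ z.im}) := by
    apply tendsto_nhdsWithin_iff.2
    constructor
    · have hc : Continuous (fun ε : ℝ => (y : ℂ) + (ε : ℂ) * zt - x) := by fun_prop
      have := hc.tendsto 0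
      simp only [Complex.ofReal_zero, zero_mul, add_zero] at this
      exact this.mono_left nhdsWithin_le_nhds
    · filter_upwards [self_mem_nhdsWithin] with ε hε
      have : 0 < ε := hε
      simp
      positivity
  have h2 := ((hlog.tendsto.comp hin).mul_const (1 / 2 : ℂ)).cexp
  unfold csqrt
  rw [Complex.cpow_def_of_ne_zero hne]
  refine h2.congr' ?_
  filter_upwards [self_mem_nhdsWithin] with ε hε
  have hp : 0 < ε := hε
  have hn : (y : ℂ) + (ε : ℂ) * zt - x ≠ 0 := by
    intro h
    have := congrArg Complex.im h
    simp at this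
    rcases this with h | h <;> linarith
  rw [Complex.cpow_def_of_ne_zero hn]
  rfl

/-- Restriction of `ω^{-,+}` to the boundary stratum `β` reproduces the 2-colored propagator
`ω^-`: for `z̃ ≠ w̃` in the open upper half-plane and reals `y < x`, as `ε → 0⁺`,
`η^{-,+}(y + ε z̃, y + ε w̃, x)` tends to `(w̃ - z̃)/(conj w̃ - z̃)`, the argument function of
Kontsevich's propagator `ω^-`. -/
theorem etaMP_tendsto_two_colored_propagator_on_beta
    (zt wt : ℂ) (hz : 0 < zt.im) (hw : 0 < wt.im) (hne : zt ≠ wt)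
    (x y : ℝ) (hxy : y < x) :
    Filter.Tendsto
      (fun ε : ℝ => etaMP ((y : ℂ) + (ε : ℂ) * zt) ((y : ℂ) + (ε : ℂ) * wt) x)
      (nhdsWithin 0 (Set.Ioi 0))
      (nhds ((wt - zt) / ((starRingEnd ℂ) wt - zt))) := by
  have ha := csqrt_tendsto_aux zt hz x y hxy
  have hb := csqrt_tendsto_aux wt hw x y hxy
  have hL := csqrt_sq_aux ((y : ℂ) - x)
  generalize csqrt ((y : ℂ) - x) = L at ha hb hL
  have hre : L.re = 0 := by
    have h1 := congrArg Complex.re hL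
    have h2 := congrArg Complex.im hL
    simp [pow_two] at h1 h2
    by_contra h
    have h3 : L.re * L.im = 0 := by linarith
    have h4 : L.im = 0 := by simpa [h] using h3
    rw [h4] at h1
    nlinarith [mul_self_nonneg L.re]
  have hL0 : L ≠ 0 := by
    rintro rfl
    have h1 := congrArg Complex.re hL
    simp at h1
    linarith
  have hconj : (starRingEnd ℂ) L = -L := by
    apply Complex.ext <;> simp [hre]
  have hbc : Filter.Tendsto (fun ε : ℝ => (starRingEnd ℂ) (csqrt ((y : ℂ) + (ε : ℂ) * wt - x)))
      (nhdsWithin 0 (Set.Ioi 0)) (nhds (-L)) := by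
    rw [← hconj]
    exact (Complex.continuous_conj.tendsto L).comp hb
  have hLL : L + L ≠ 0 := by
    rw [← two_mul]; exact mul_ne_zero two_ne_zero hL0
  have hsum := ha.add hb
  have hlim := (((ha.sub hbc).pow 2).div (hsum.pow 2) (pow_ne_zero 2 hLL)).const_mul
    ((wt - zt) / ((starRingEnd ℂ) wt - zt))
  rw [sub_neg_eq_add, div_self (pow_ne_zero 2 hLL), mul_one] at hlim
  refine hlim.congr' ?_
  filter_upwards [self_mem_nhdsWithin, hsum.eventually_ne hLL] with ε hε hs
  have hp : 0 < ε := hε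
  have hε0 : (ε : ℂ) ≠ 0 := by exact_mod_cast hp.ne'
  have hd : (starRingEnd ℂ) wt - zt ≠ 0 := by
    intro h
    have := congrArg Complex.im h
    simp at this
    linarith
  have sa := csqrt_sq_aux ((y : ℂ) + (ε : ℂ) * zt - x)
  have sb := csqrt_sq_aux ((y : ℂ) + (ε : ℂ) * wt - x)
  have sc := congrArg (starRingEnd ℂ) sb
  simp only [map_pow, map_sub, map_add, map_mul, Complex.conj_ofReal] at sc
  unfold etaMP
  simp only [Pi.div_apply]
  generalize (starRingEnd ℂ) (csqrt ((y : ℂ) + (ε : ℂ) * wt - x)) = c at *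
  generalize csqrt ((y : ℂ) + (ε : ℂ) * wt - x) = b at *
  generalize csqrt ((y : ℂ) + (ε : ℂ) * zt - x) = a at *
  generalize (starRingEnd ℂ) wt = wc at *
  have e1 : (a - b) * (a + b) = ε * (zt - wt) := by linear_combination sa - sb
  have e2 : (a - c) * (a + c) = ε * (zt - wc) := by linear_combination sa - sc
  have hac : a + c ≠ 0 := by
    intro h
    rw [h, mul_zero] at e2
    rcases mul_eq_zero.1 e2.symm with h | h
    · exact hε0 h
    · exact hd (by linear_combination -h)
  rw [div_mul_div_comm, div_eq_div_iff (mul_ne_zero hd (pow_ne_zero 2 hs)) (mul_ne_zero hac hs)]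
  apply mul_left_cancel₀ hε0
  linear_combination (a - c) * (a + b) * ((a - c) * (a + c) * e1 - (a - b) * (a + b) * e2) + 0
end
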